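/- arXiv:2005.08201 — 2 statements merged into one kernel-verified Lean document; each statement's English description precedes it below -/
import Mathlib

section
/- Let F_q be a finite field of odd characteristic p with q = p^n elements. If q ≡ -1 (mod 8) or q ≡ -3 (mod 8), then the unit group U(F_q[QD_16]) of the group algebra F_q[QD_16] is isomorphic to C_{q-1}^4 × GL(2,F_q) × GL(2,F_{q^2}), where F_{q^2} is the field with q^2 elements. -/
/-- Relations for the quasidihedral group `QD_{2^k}`:
`a^(2^(k-1)) = 1`, `x^2 = 1`, `x * a * x = a^(2^(k-2)-1)`. -/
def qdRels (k : ℕ) : Set (FreeGroup (Fin 2)) :=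
  {FreeGroup.of 0 ^ (2 ^ (k - 1)), FreeGroup.of 1 ^ 2,
    FreeGroup.of 1 * FreeGroup.of 0 * FreeGroup.of 1 * (FreeGroup.of 0 ^ (2 ^ (k - 2) - 1))⁻¹}

/-- The quasidihedral group of order 16: `⟨a, x | a^8 = x^2 = 1, x a x = a^3⟩`. -/
def QD16 : Type := PresentedGroup (qdRels 4)

instance : Group QD16 := inferInstanceAs (Group (PresentedGroup (qdRels 4)))

/-!
Over a field `F` in which `-2` is not a square (so `2 ≠ 0`), the algebra `F[QD₁₆]` splits along
the chain `a ^ 4`, `a ^ 2`, `a`, `x`: whenever `z` acts as `1` on one quotient and as `-1` on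
another, the elements `(1 ± z) / 2` separate the two. The part `a ^ 4 = -1` maps onto `M₂(K)`,
where `K = F(√-2)` is generated by `√-2 = a + a ^ 3`; the part `a ^ 2 = -1` maps onto `M₂(F)`; and
`a = ±1`, `x = ±1` give four copies of `F`. The dimensions `4 + 4 + 8` add up to `16`, which bounds
the order of `QD₁₆`, so the resulting surjection is an isomorphism. For `F` finite of odd order,
the congruences on `q` say exactly that `-2` is not a square in `F`.
-/

section TwoGenerated

open Subgroup
open scoped Pointwise

variable {G : Type*} [Group G]

theorem mem_normalizer_of_sq_eq_one {H : Subgroup G} {x : G} (hx : x ^ 2 = 1)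
    (hconj : ∀ h ∈ H, x * h * x⁻¹ ∈ H) : x ∈ normalizer (H : Set G) := by
  refine mem_normalizer_iff.2 fun h ↦ ⟨hconj h, fun hh ↦ ?_⟩
  have hconj_conj : x * (x * h * x⁻¹) * x⁻¹ = x ^ 2 * h * (x ^ 2)⁻¹ := by
    simp only [pow_two, mul_inv_rev, mul_assoc]
  simpa only [hconj_conj, hx, one_mul, inv_one, mul_one] using hconj _ hh

variable {a x : G}

theorem zpowers_mul_zpowers_eq_univ (hgen : closure {a, x} = ⊤)
    (hx : x ∈ normalizer (zpowers a : Set G)) :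
    (zpowers a : Set G) * (zpowers x : Set G) = Set.univ := by
  have hsup : zpowers a ⊔ zpowers x = ⊤ := by
    rw [← hgen, ← Set.singleton_union, Subgroup.closure_union, zpowers_eq_closure,
      zpowers_eq_closure]
  rw [← coe_mul_of_right_le_normalizer_left _ _ (zpowers_le.2 hx), hsup, coe_top]

theorem finite_of_closure_pair_eq_top (hgen : closure {a, x} = ⊤)
    (hx : x ∈ normalizer (zpowers a : Set G)) (ha : IsOfFinOrder a) (hx' : IsOfFinOrder x) :
    Finite G := by
  rw [← Set.finite_univ_iff, ← zpowers_mul_zpowers_eq_univ hgen hx]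
  exact (finite_zpowers.2 ha).mul (finite_zpowers.2 hx')

theorem card_le_orderOf_mul_orderOf (hgen : closure {a, x} = ⊤)
    (hx : x ∈ normalizer (zpowers a : Set G)) : Nat.card G ≤ orderOf a * orderOf x := by
  rw [← Nat.card_zpowers, ← Nat.card_zpowers, ← Nat.card_univ (α := G),
    ← zpowers_mul_zpowers_eq_univ hgen hx]
  exact Set.natCard_mul_le

end TwoGenerated

/-- A pair of elements of a monoid satisfying the defining relations of `QD16`; such pairs
correspond to homomorphisms from `QD16` to the monoid. -/
structure IsQuasidihedralPair {M : Type*} [Monoid M] (A X : M) : Prop where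
  pow_eight : A ^ 8 = 1
  sq : X ^ 2 = 1
  conj : X * A * X = A ^ 3

theorem IsQuasidihedralPair.mem_normalizer_zpowers {G : Type*} [Group G] {a x : G}
    (h : IsQuasidihedralPair a x) : x ∈ Subgroup.normalizer (Subgroup.zpowers a : Set G) := by
  have hinv : x⁻¹ = x := inv_eq_of_mul_eq_one_left (by rw [← pow_two, h.sq])
  have hconj : x * a * x⁻¹ = a ^ 3 := by rw [hinv, h.conj]
  refine mem_normalizer_of_sq_eq_one h.sq ?_
  rintro _ ⟨k, rfl⟩
  simpa only [← conj_zpow, hconj] using zpow_mem (pow_mem (Subgroup.mem_zpowers a) 3) k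

namespace QD16

/-- The generator `a` of order eight. -/
def a : QD16 := PresentedGroup.of (rels := qdRels 4) 0

/-- The generator `x` of order two. -/
def x : QD16 := PresentedGroup.of (rels := qdRels 4) 1

theorem isQuasidihedralPair : IsQuasidihedralPair a x where
  pow_eight := PresentedGroup.one_of_mem (rels := qdRels 4)
    (x := FreeGroup.of 0 ^ 2 ^ (4 - 1)) (by simp [qdRels])
  sq := PresentedGroup.one_of_mem (rels := qdRels 4) (x := FreeGroup.of 1 ^ 2) (by simp [qdRels])
  conj := PresentedGroup.mk_eq_mk_of_mul_inv_mem (rels := qdRels 4)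
    (x := FreeGroup.of 1 * FreeGroup.of 0 * FreeGroup.of 1)
    (y := FreeGroup.of 0 ^ (2 ^ (4 - 2) - 1)) (by simp [qdRels])

theorem closure_a_x : Subgroup.closure {a, x} = ⊤ := by
  refine (Subgroup.eq_top_iff' _).2 (PresentedGroup.generated_by (qdRels 4) _ ?_)
  exact Fin.forall_fin_two.2 ⟨Subgroup.subset_closure (Set.mem_insert _ _),
    Subgroup.subset_closure (Set.mem_insert_of_mem _ rfl)⟩

instance : Finite QD16 :=
  finite_of_closure_pair_eq_top closure_a_x isQuasidihedralPair.mem_normalizer_zpowers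
    (isOfFinOrder_iff_pow_eq_one.2 ⟨8, by norm_num, isQuasidihedralPair.pow_eight⟩)
    (isOfFinOrder_iff_pow_eq_one.2 ⟨2, by norm_num, isQuasidihedralPair.sq⟩)

theorem card_le : Nat.card QD16 ≤ 16 :=
  calc Nat.card QD16 ≤ orderOf a * orderOf x :=
        card_le_orderOf_mul_orderOf closure_a_x isQuasidihedralPair.mem_normalizer_zpowers
    _ ≤ 8 * 2 := Nat.mul_le_mul
        (orderOf_le_of_pow_eq_one (by norm_num) isQuasidihedralPair.pow_eight)
        (orderOf_le_of_pow_eq_one (by norm_num) isQuasidihedralPair.sq)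

end QD16

namespace IsQuasidihedralPair

theorem of_sq_eq_one {M : Type*} [CommMonoid M] {A X : M} (hA : A ^ 2 = 1) (hX : X ^ 2 = 1) :
    IsQuasidihedralPair A X where
  pow_eight := by rw [pow_mul A 2 4, hA, one_pow]
  sq := hX
  conj := by rw [mul_right_comm, ← pow_two, hX, pow_succ, hA]

section Monoid

variable {M : Type*} [Monoid M] {A X : M}

/-- The pair `(A, X)` as units of `M`, indexed like the generators of `qdRels`. -/
def units (h : IsQuasidihedralPair A X) : Fin 2 → Mˣ :=
  ![.ofPowEqOne A 8 h.pow_eight (by norm_num), .ofPowEqOne X 2 h.sq (by norm_num)]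

theorem freeGroupLift_units_eq_one (h : IsQuasidihedralPair A X) :
    ∀ r ∈ qdRels 4, FreeGroup.lift h.units r = 1 := by
  rintro r (rfl | rfl | rfl)
  · ext; simp [units]
  · ext; simp [units]
  · rw [map_mul, map_inv, mul_inv_eq_one]
    ext; simp [units, h.conj]

/-- The homomorphism `QD16 →* M` with `a ↦ A` and `x ↦ X`. -/
def lift (h : IsQuasidihedralPair A X) : QD16 →* M :=
  (Units.coeHom M).comp (PresentedGroup.toGroup h.freeGroupLift_units_eq_one)

theorem lift_a (h : IsQuasidihedralPair A X) : h.lift QD16.a = A :=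
  congrArg Units.val (PresentedGroup.toGroup.of h.freeGroupLift_units_eq_one)

theorem lift_x (h : IsQuasidihedralPair A X) : h.lift QD16.x = X :=
  congrArg Units.val (PresentedGroup.toGroup.of h.freeGroupLift_units_eq_one)

end Monoid

section Algebra

variable {B : Type*} [Semiring B] {A X : B} (R : Type*) [CommSemiring R] [Algebra R B]

/-- The algebra homomorphism `R[QD16] →ₐ[R] B` with `a ↦ A` and `x ↦ X`. -/
noncomputable def algLift (h : IsQuasidihedralPair A X) : MonoidAlgebra R QD16 →ₐ[R] B :=
  MonoidAlgebra.lift R B QD16 h.lift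

theorem algLift_of_a (h : IsQuasidihedralPair A X) :
    h.algLift R (MonoidAlgebra.of R QD16 QD16.a) = A := by
  rw [algLift, MonoidAlgebra.lift_of, lift_a]

theorem algLift_of_x (h : IsQuasidihedralPair A X) :
    h.algLift R (MonoidAlgebra.of R QD16 QD16.x) = X := by
  rw [algLift, MonoidAlgebra.lift_of, lift_x]

end Algebra

end IsQuasidihedralPair

theorem algHom_prod_surjective_of_map_eq_neg_one {R A B C : Type*} [CommRing R]
    [Ring A] [Ring B] [Ring C] [Algebra R A] [Algebra R B] [Algebra R C] (h2 : IsUnit (2 : R))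
    {f : A →ₐ[R] B} {g : A →ₐ[R] C} (hf : Function.Surjective f) (hg : Function.Surjective g)
    (z : A) (hfz : f z = 1) (hgz : g z = -1) : Function.Surjective (f.prod g) := by
  rintro ⟨b, c⟩
  obtain ⟨m, rfl⟩ := hf b
  obtain ⟨n, rfl⟩ := hg c
  let := h2.invertible
  refine ⟨(⅟2 : R) • ((1 + z) * m + (1 - z) * n), Prod.ext ?_ ?_⟩
  · simp [hfz, add_mul, invOf_two_smul_add_invOf_two_smul]
  · simp [hgz, add_mul, invOf_two_smul_add_invOf_two_smul]

section Matrices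

open Matrix

/-- The reflection `diag(1, -1)`, the image of `x` in both two-dimensional representations. -/
def reflection (R : Type*) [Ring R] : Matrix (Fin 2) (Fin 2) R :=
  !![1, 0; 0, -1]

/-- The rotation by a right angle, the image of `a` in the two-dimensional representation
over `F`. -/
def quarterTurn (R : Type*) [Ring R] : Matrix (Fin 2) (Fin 2) R :=
  !![0, -1; 1, 0]

/-- The image of `a` in the faithful two-dimensional representation, where `s ^ 2 = -2`. In the
basis where `x` is diagonal, the relation `x * a * x = a ^ 3` forces this shape up to scaling the
basis vectors: trace `s`, determinant `-1` and equal diagonal entries. -/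
def eighthTurn {K : Type*} [Field K] (s : K) : Matrix (Fin 2) (Fin 2) K :=
  !![s / 2, 1 / 2; 1, s / 2]

theorem reflection_sq (R : Type*) [Ring R] : reflection R ^ 2 = 1 := by
  simp [reflection, pow_two, one_fin_two]

theorem quarterTurn_sq (R : Type*) [Ring R] : quarterTurn R ^ 2 = -1 := by
  simp [quarterTurn, pow_two, one_fin_two]

theorem isQuasidihedralPair_quarterTurn (R : Type*) [Ring R] :
    IsQuasidihedralPair (quarterTurn R) (reflection R) where
  pow_eight := by rw [pow_mul _ 2 4, quarterTurn_sq]; norm_num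
  sq := reflection_sq R
  conj := by rw [pow_succ, quarterTurn_sq]; simp [quarterTurn, reflection]

section EighthTurn

variable {K : Type*} [Field K] [NeZero (2 : K)] {s : K}

theorem eighthTurn_sq (hs : s ^ 2 = -2) : eighthTurn s ^ 2 = !![0, s / 2; s, 0] := by
  have h2 : (2 : K) ≠ 0 := two_ne_zero
  rw [pow_two, eighthTurn, mul_fin_two]
  congr! 3 <;> grind

theorem eighthTurn_pow_three (hs : s ^ 2 = -2) :
    eighthTurn s ^ 3 = !![s / 2, -1 / 2; -1, s / 2] := by
  have h2 : (2 : K) ≠ 0 := two_ne_zero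
  rw [pow_succ, eighthTurn_sq hs, eighthTurn, mul_fin_two]
  congr! 3 <;> grind

theorem eighthTurn_pow_four (hs : s ^ 2 = -2) : eighthTurn s ^ 4 = -1 := by
  have hprod : s / 2 * s = -1 := by
    rw [div_mul_eq_mul_div, ← pow_two, hs, neg_div, div_self two_ne_zero]
  rw [pow_mul _ 2 2, eighthTurn_sq hs, pow_two]
  simp [one_fin_two, hprod, mul_comm s]

theorem isQuasidihedralPair_eighthTurn (hs : s ^ 2 = -2) :
    IsQuasidihedralPair (eighthTurn s) (reflection K) where
  pow_eight := by rw [pow_mul _ 4 2, eighthTurn_pow_four hs]; norm_num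
  sq := reflection_sq K
  conj := by
    rw [eighthTurn_pow_three hs]
    simp [eighthTurn, reflection, neg_div]

theorem eighthTurn_add_pow_three (hs : s ^ 2 = -2) :
    eighthTurn s + eighthTurn s ^ 3 = algebraMap K _ s := by
  rw [eighthTurn_pow_three hs, eighthTurn]
  ext i j
  fin_cases i <;> fin_cases j <;> simp [Matrix.algebraMap_matrix_apply, neg_div]

end EighthTurn

theorem subalgebra_eq_top_of_reflection_mem {F K : Type*} [CommRing F] [Field K] [Algebra F K]
    [NeZero (2 : K)] {S : Subalgebra F (Matrix (Fin 2) (Fin 2) K)}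
    (hscalar : ∀ k, algebraMap K _ k ∈ S) (hX : reflection K ∈ S) {A : Matrix (Fin 2) (Fin 2) K}
    (hA : A ∈ S) (hA₀₁ : A 0 1 ≠ 0) (hA₁₀ : A 1 0 ≠ 0) : S = ⊤ := by
  have hsmul (k : K) {M : Matrix (Fin 2) (Fin 2) K} (hM : M ∈ S) : k • M ∈ S := by
    rw [Algebra.smul_def]
    exact S.mul_mem (hscalar k) hM
  have hP : !![1, 0; 0, 0] ∈ S := by
    convert! hsmul 2⁻¹ (S.add_mem S.one_mem hX)
    simp [reflection, one_fin_two, one_add_one_eq_two, two_ne_zero]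
  have hQ : !![0, 0; 0, 1] ∈ S := by
    convert! S.sub_mem S.one_mem hP
    simp [one_fin_two]
  refine eq_top_iff.2 fun N _ ↦ ?_
  have hN : N = N 0 0 • !![1, 0; 0, 0] + (N 0 1 / A 0 1) • (!![1, 0; 0, 0] * A * !![0, 0; 0, 1])
      + (N 1 0 / A 1 0) • (!![0, 0; 0, 1] * A * !![1, 0; 0, 0]) + N 1 1 • !![0, 0; 0, 1] := by
    rw [eta_fin_two A]
    ext i j
    fin_cases i <;> fin_cases j <;> simp [hA₀₁, hA₁₀]
  rw [hN]
  exact S.add_mem (S.add_mem (S.add_mem (hsmul _ hP) (hsmul _ (S.mul_mem (S.mul_mem hP hA) hQ)))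
    (hsmul _ (S.mul_mem (S.mul_mem hQ hA) hP))) (hsmul _ hQ)

end Matrices

section FieldExtension

theorem adjoin_singleton_eq_top_of_isQuadraticExtension {F K : Type*} [Field F] [Field K]
    [Algebra F K] [Algebra.IsQuadraticExtension F K] {s : K}
    (hs : s ∉ Set.range (algebraMap F K)) : Algebra.adjoin F {s} = ⊤ := by
  have := Subalgebra.isSimpleOrder_of_finrank_prime F K
    (Algebra.IsQuadraticExtension.finrank_eq_two F K ▸ Nat.prime_two)
  refine (eq_bot_or_eq_top _).resolve_left fun hbot ↦ hs ?_
  rw [← Algebra.mem_bot, ← hbot]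
  exact Algebra.self_mem_adjoin_singleton F s

theorem isSquare_algebraMap_of_even_finrank {F K : Type*} [Field F] [Field K] [Finite K]
    [Algebra F K] (heven : Even (Module.finrank F K)) (c : F) : IsSquare (algebraMap F K c) := by
  have : Finite F := .of_injective _ (algebraMap F K).injective
  by_cases hchar : ringChar F = 2
  · exact (FiniteField.isSquare_of_char_two hchar c).map _
  have hodd : Odd (Nat.card F) := by
    have := Fintype.ofFinite F
    rw [Nat.card_eq_fintype_card, Nat.odd_iff]
    exact FiniteField.odd_card_of_char_ne_two hchar
  obtain ⟨y, rfl⟩ := FiniteField.norm_surjective F K c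
  rw [FiniteField.algebraMap_norm_eq_pow_sum]
  refine Even.isSquare_pow ?_ y
  rw [Finset.even_sum_iff_even_card_odd, Finset.filter_true_of_mem fun i _ ↦ hodd.pow,
    Finset.card_range]
  exact heven

theorem isQuadraticExtension_of_card_eq_sq {F K : Type*} [Field F] [Field K] [Fintype F]
    [Fintype K] [Algebra F K] (hK : Fintype.card K = Fintype.card F ^ 2) :
    Algebra.IsQuadraticExtension F K where
  finrank_eq_two' := by
    rw [Module.card_eq_pow_finrank (K := F)] at hK
    exact Nat.pow_right_injective Fintype.one_lt_card hK

theorem nonempty_units_mulEquiv_zmod (F : Type*) [Field F] [Fintype F] :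
    Nonempty (Fˣ ≃* Multiplicative (ZMod (Fintype.card F - 1))) := by
  rw [← Nat.card_eq_fintype_card, ← Nat.card_units]
  exact ⟨(zmodCyclicMulEquiv inferInstance).symm⟩

end FieldExtension

section GroupAlgebra

open MonoidAlgebra

variable (F : Type*) [Field F]

/-- The one-dimensional representation `a ↦ ε`, `x ↦ δ`. -/
noncomputable def signCharacter {ε δ : F} (hε : ε ^ 2 = 1) (hδ : δ ^ 2 = 1) :
    MonoidAlgebra F QD16 →ₐ[F] F :=
  (IsQuasidihedralPair.of_sq_eq_one hε hδ).algLift F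

/-- The four one-dimensional representations, grouped by the image of `a`. -/
noncomputable def signCharacters : MonoidAlgebra F QD16 →ₐ[F] (F × F) × F × F :=
  ((signCharacter F (one_pow 2) (one_pow 2)).prod
    (signCharacter F (one_pow 2) neg_one_sq)).prod
  ((signCharacter F neg_one_sq (one_pow 2)).prod (signCharacter F neg_one_sq neg_one_sq))

/-- The representation over `F` with `a ^ 2 ↦ -1`. -/
noncomputable def quarterTurnRep : MonoidAlgebra F QD16 →ₐ[F] Matrix (Fin 2) (Fin 2) F :=
  (isQuasidihedralPair_quarterTurn F).algLift F

variable {F} in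
theorem signCharacter_surjective {ε δ : F} (hε : ε ^ 2 = 1) (hδ : δ ^ 2 = 1) :
    Function.Surjective (signCharacter F hε hδ) :=
  fun c ↦ ⟨algebraMap F _ c, AlgHom.commutes _ c⟩

theorem signCharacters_of_a : signCharacters F (of F QD16 QD16.a) = (1, -1) := by
  simp only [signCharacters, signCharacter, AlgHom.prod_apply, IsQuasidihedralPair.algLift_of_a]
  rfl

theorem signCharacters_surjective [NeZero (2 : F)] : Function.Surjective (signCharacters F) := by
  have h2 : IsUnit (2 : F) := two_ne_zero.isUnit
  have hpair {ε : F} (hε : ε ^ 2 = 1) : Function.Surjective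
      ((signCharacter F hε (one_pow 2)).prod (signCharacter F hε neg_one_sq)) :=
    algHom_prod_surjective_of_map_eq_neg_one h2 (signCharacter_surjective _ _)
      (signCharacter_surjective _ _) (of F QD16 QD16.x)
      (IsQuasidihedralPair.algLift_of_x _ _) (IsQuasidihedralPair.algLift_of_x _ _)
  exact algHom_prod_surjective_of_map_eq_neg_one h2 (hpair _) (hpair _) (of F QD16 QD16.a)
    (congrArg Prod.fst (signCharacters_of_a F)) (congrArg Prod.snd (signCharacters_of_a F))

theorem quarterTurnRep_surjective [NeZero (2 : F)] : Function.Surjective (quarterTurnRep F) := by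
  have ha := IsQuasidihedralPair.algLift_of_a F (isQuasidihedralPair_quarterTurn F)
  have hx := IsQuasidihedralPair.algLift_of_x F (isQuasidihedralPair_quarterTurn F)
  exact AlgHom.range_eq_top _ |>.1 <| subalgebra_eq_top_of_reflection_mem
    (Subalgebra.algebraMap_mem _) ⟨_, hx⟩ ⟨_, ha⟩ (by simp [quarterTurn]) (by simp [quarterTurn])

variable {K : Type*} [Field K] [Algebra F K] [NeZero (2 : K)] {s : K}

/-- The faithful representation over `K`, in which `a + a ^ 3` acts as the scalar `s = √-2`. -/
noncomputable def eighthTurnRep (hs : s ^ 2 = -2) :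
    MonoidAlgebra F QD16 →ₐ[F] Matrix (Fin 2) (Fin 2) K :=
  (isQuasidihedralPair_eighthTurn hs).algLift F

theorem eighthTurnRep_surjective (hs : s ^ 2 = -2) (hgen : Algebra.adjoin F {s} = ⊤) :
    Function.Surjective (eighthTurnRep F hs) := by
  have ha : eighthTurn s ∈ (eighthTurnRep F hs).range :=
    ⟨_, (isQuasidihedralPair_eighthTurn hs).algLift_of_a F⟩
  have hx : reflection K ∈ (eighthTurnRep F hs).range :=
    ⟨_, (isQuasidihedralPair_eighthTurn hs).algLift_of_x F⟩
  have hscalar : Algebra.adjoin F {s} ≤ (eighthTurnRep F hs).range.comap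
      (IsScalarTower.toAlgHom F K (Matrix (Fin 2) (Fin 2) K)) := by
    rw [Algebra.adjoin_le_iff, Set.singleton_subset_iff, SetLike.mem_coe,
      Subalgebra.mem_comap, IsScalarTower.coe_toAlgHom', ← eighthTurn_add_pow_three hs]
    exact add_mem ha (pow_mem ha 3)
  exact AlgHom.range_eq_top _ |>.1 <| subalgebra_eq_top_of_reflection_mem
    (fun _ ↦ hscalar (hgen ▸ Algebra.mem_top)) hx ha
    (by simp [eighthTurn, two_ne_zero]) (by simp [eighthTurn])

theorem prod_signCharacters_reps_surjective (hs : s ^ 2 = -2) (hgen : Algebra.adjoin F {s} = ⊤) :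
    Function.Surjective
      (((signCharacters F).prod (quarterTurnRep F)).prod (eighthTurnRep F hs)) := by
  have : NeZero (2 : F) :=
    ⟨fun h ↦ two_ne_zero (α := K) <| by
      simpa only [map_ofNat, map_zero] using congrArg (algebraMap F K) h⟩
  have h2 : IsUnit (2 : F) := two_ne_zero.isUnit
  have hquarter : quarterTurnRep F (of F QD16 QD16.a ^ 2) = -1 := by
    rw [map_pow, quarterTurnRep, IsQuasidihedralPair.algLift_of_a, quarterTurn_sq]
  have heighth : eighthTurnRep F hs (of F QD16 QD16.a ^ 4) = -1 := by
    rw [map_pow, eighthTurnRep, IsQuasidihedralPair.algLift_of_a, eighthTurn_pow_four hs]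
  have hsign : signCharacters F (of F QD16 QD16.a ^ 2) = 1 := by
    simp [signCharacters_of_a, -of_apply]
  refine algHom_prod_surjective_of_map_eq_neg_one h2 ?_ (eighthTurnRep_surjective F hs hgen)
    (of F QD16 QD16.a ^ 4) ?_ heighth
  · exact algHom_prod_surjective_of_map_eq_neg_one h2 (signCharacters_surjective F)
      (quarterTurnRep_surjective F) _ hsign hquarter
  · have hsq := AlgHom.prod_apply (signCharacters F) (quarterTurnRep F) (of F QD16 QD16.a ^ 2)
    rw [pow_mul _ 2 2, map_pow, hsq, hsign, hquarter, Prod.pow_mk, one_pow, neg_one_sq]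
    rfl

/-- The Wedderburn decomposition map of `F[QD16]` when `K = F(√-2)` is quadratic over `F`. -/
noncomputable def wedderburnHom (hs : s ^ 2 = -2) : MonoidAlgebra F QD16 →ₐ[F]
    F × F × F × F × Matrix (Fin 2) (Fin 2) F × Matrix (Fin 2) (Fin 2) K :=
  (signCharacter F (one_pow 2) (one_pow 2)).prod <|
    (signCharacter F (one_pow 2) neg_one_sq).prod <|
    (signCharacter F neg_one_sq (one_pow 2)).prod <|
    (signCharacter F neg_one_sq neg_one_sq).prod <|
    (quarterTurnRep F).prod (eighthTurnRep F hs)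

theorem wedderburnHom_surjective (hs : s ^ 2 = -2) (hgen : Algebra.adjoin F {s} = ⊤) :
    Function.Surjective (wedderburnHom F hs) := by
  rintro ⟨c₁, c₂, c₃, c₄, M, N⟩
  obtain ⟨y, hy⟩ := prod_signCharacters_reps_surjective F hs hgen ((((c₁, c₂), c₃, c₄), M), N)
  refine ⟨y, ?_⟩
  simpa only [wedderburnHom, signCharacters, AlgHom.prod_apply, Prod.mk.injEq, and_assoc] using hy

theorem wedderburnHom_bijective [Algebra.IsQuadraticExtension F K] (hs : s ^ 2 = -2)
    (hgen : Algebra.adjoin F {s} = ⊤) : Function.Bijective (wedderburnHom F hs) := by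
  have hdegree : Module.finrank F K = 2 := Algebra.IsQuadraticExtension.finrank_eq_two F K
  have : Module.Finite F K := Module.finite_of_finrank_pos (by rw [hdegree]; exact two_pos)
  have : Module.Finite F (MonoidAlgebra F QD16) := .of_basis (MonoidAlgebra.basis QD16 F)
  have hsource : Module.finrank F (MonoidAlgebra F QD16) = Nat.card QD16 :=
    Module.finrank_eq_nat_card_basis (MonoidAlgebra.basis QD16 F)
  have htarget : Module.finrank F
      (F × F × F × F × Matrix (Fin 2) (Fin 2) F × Matrix (Fin 2) (Fin 2) K) = 16 := by
    simp [Module.finrank_matrix, hdegree]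
  exact OrzechProperty.bijective_of_surjective_of_finrank_le (wedderburnHom F hs).toLinearMap
    (wedderburnHom_surjective F hs hgen) (by rw [hsource, htarget]; exact QD16.card_le)

end GroupAlgebra

theorem unitGroup_QD16_neg_one_three_general {F K : Type*} [Field F] [Field K] [Algebra F K]
    [Algebra.IsQuadraticExtension F K] (hF : ¬IsSquare (-2 : F)) (hK : IsSquare (-2 : K)) :
    Nonempty ((MonoidAlgebra F QD16)ˣ ≃* Fˣ × Fˣ × Fˣ × Fˣ ×
      Matrix.GeneralLinearGroup (Fin 2) F × Matrix.GeneralLinearGroup (Fin 2) K) := by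
  have h2 : (2 : F) ≠ 0 := fun h ↦ hF (by simp [h])
  have : NeZero (2 : K) := ⟨by simpa only [map_ofNat] using (map_ne_zero (algebraMap F K)).2 h2⟩
  obtain ⟨s, hs⟩ := hK.exists_sq
  have hsF : s ∉ Set.range (algebraMap F K) := by
    rintro ⟨t, rfl⟩
    exact hF ⟨t, (algebraMap F K).injective (by simpa [pow_two, map_ofNat] using hs)⟩
  let e := AlgEquiv.ofBijective (wedderburnHom F hs.symm)
    (wedderburnHom_bijective F hs.symm (adjoin_singleton_eq_top_of_isQuadraticExtension hsF))
  exact ⟨(Units.mapEquiv e.toMulEquiv).trans <|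
    MulEquiv.prodUnits.trans <| (MulEquiv.refl _).prodCongr <|
    MulEquiv.prodUnits.trans <| (MulEquiv.refl _).prodCongr <|
    MulEquiv.prodUnits.trans <| (MulEquiv.refl _).prodCongr <|
    MulEquiv.prodUnits.trans <| (MulEquiv.refl _).prodCongr MulEquiv.prodUnits⟩

/-- For `q ≡ -1, -3 (mod 8)` (i.e. `q % 8 = 7` or `q % 8 = 5`),
`U(F_q[QD_16]) ≅ C_{q-1}⁴ × GL(2,F_q) × GL(2,F_{q²})`. -/
theorem unitGroup_QD16_neg_one_three (F : Type) [Field F] [Fintype F]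
    (p n : ℕ) [Fact p.Prime] (hp : Odd p) [CharP F p]
    (hn : 0 < n) (hq : Fintype.card F = p ^ n)
    (h8 : Fintype.card F % 8 = 7 ∨ Fintype.card F % 8 = 5)
    (K : Type) [Field K] [Fintype K] [Algebra F K]
    (hK : Fintype.card K = Fintype.card F ^ 2) :
    Nonempty ((MonoidAlgebra F QD16)ˣ ≃*
      (Multiplicative (ZMod (Fintype.card F - 1)) ×
       Multiplicative (ZMod (Fintype.card F - 1)) ×
       Multiplicative (ZMod (Fintype.card F - 1)) ×
       Multiplicative (ZMod (Fintype.card F - 1)) ×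
       Matrix.GeneralLinearGroup (Fin 2) F ×
       Matrix.GeneralLinearGroup (Fin 2) K)) := by
  have := isQuadraticExtension_of_card_eq_sq hK
  have hF : ¬IsSquare (-2 : F) := by
    rw [FiniteField.isSquare_neg_two_iff]
    omega
  have hsq : IsSquare (-2 : K) := by
    simpa only [map_neg, map_ofNat] using isSquare_algebraMap_of_even_finrank (F := F) (K := K)
      (Algebra.IsQuadraticExtension.finrank_eq_two F K ▸ even_two) (-2)
  obtain ⟨e⟩ := unitGroup_QD16_neg_one_three_general hF hsq
  obtain ⟨c⟩ := nonempty_units_mulEquiv_zmod F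
  exact ⟨e.trans <| c.prodCongr <| c.prodCongr <| c.prodCongr <| c.prodCongr <| .refl _⟩
end

section
/- Let F_q be a finite field of odd characteristic p with q = p^n elements. If q ≡ ±3 (mod 16) or q ≡ ±5 (mod 16), then the group algebra F_q[QD_32] is isomorphic as an F_q-algebra to F_q ⊕ F_q ⊕ F_q ⊕ F_q ⊕ M(2,F_q) ⊕ M(2,F_{q^2}) ⊕ M(2,F_{q^4}), where F_{q^m} denotes the field with q^m elements. -/
/-- The quasidihedral group of order 32: `⟨a, x | a^16 = x^2 = 1, x a x = a^7⟩`. -/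
def QD32 : Type := PresentedGroup (qdRels 5)

instance : Group QD32 := inferInstanceAs (Group (PresentedGroup (qdRels 5)))

/-!
Let `A` be multiplication by `T` on `K[T] / (T² - cT + d)` and `X` the conjugation `T ↦ c - T`.
Then `X A X = c - A = d A⁻¹`, so if `d² = 1` and `A⁸ = d`, the pair `(A, X)` satisfies the relations
of `QD₃₂`. This happens for `(c, d) = (0, 1)`, for `(c, 1)` with `c² = 2`, and for `(c, -1)` with
`c⁴ + 4c² + 2 = 0`, where `A² = -1`, `A⁴ = -1` and `A⁸ = -1` respectively. When `2` is invertible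
the discriminants `c² - 4d` are units, which makes each representation surjective onto the `2 × 2`
matrices over `F[c]`. Together with the four characters `a, x ↦ ±1` they form an algebra
homomorphism out of `F[QD₃₂]`; it is surjective because polynomials in `a` and `x` separate the
seven blocks, hence bijective, as both sides have dimension `32`.

Over a finite field of order `q ≡ ±3, ±5 (mod 16)`, take a primitive eighth or sixteenth root of
unity `z` and set `c = z + z⁻¹` or `c = z - z⁻¹`. The Frobenius `y ↦ y ^ q`, respectively its square
`y ↦ y ^ q²`, maps `c` to `-c`, so `c` generates the extension of degree `2`, respectively `4`.
-/

open Function Module FiniteField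

theorem pow_mul_pow_surjective_of_closure_eq_top {G : Type*} [Group G] {a x : G} {m n r : ℕ}
    [NeZero m] [NeZero n] (ha : a ^ m = 1) (hx : x ^ n = 1) (hxa : x * a = a ^ r * x)
    (hgen : Subgroup.closure {a, x} = ⊤) :
    Surjective fun ij : Fin m × Fin n ↦ a ^ (ij.1 : ℕ) * x ^ (ij.2 : ℕ) := by
  have x_pow_mul (k i : ℕ) : x ^ k * a ^ i = a ^ (r ^ k * i) * x ^ k := by
    induction k generalizing i with
    | zero => simp
    | succ k ih =>
      have x_mul : x * a ^ i = a ^ (r * i) * x := by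
        rw [pow_mul]; exact SemiconjBy.pow_right hxa i
      rw [pow_succ, mul_assoc, x_mul, ← mul_assoc, ih, mul_assoc, pow_succ, mul_assoc (r ^ k)]
  have a_inv : a⁻¹ = a ^ (m - 1) := inv_eq_of_mul_eq_one_left <| by
    rw [pow_sub_one_mul (NeZero.ne m), ha]
  have x_inv : x⁻¹ = x ^ (n - 1) := inv_eq_of_mul_eq_one_left <| by
    rw [pow_sub_one_mul (NeZero.ne n), hx]
  have normal_form (g : G) : ∃ i j : ℕ, a ^ i * x ^ j = g := by
    have hg : g ∈ Subgroup.closure {a, x} := hgen ▸ Subgroup.mem_top g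
    induction hg using Subgroup.closure_induction_left with
    | one => exact ⟨0, 0, by simp⟩
    | mul_left s hs g _ ih =>
      obtain ⟨i, j, rfl⟩ := ih
      rcases hs with rfl | rfl
      · exact ⟨1 + i, j, by rw [pow_add, pow_one, mul_assoc]⟩
      · exact ⟨r ^ 1 * i, 1 + j, by rw [pow_add, ← mul_assoc, ← x_pow_mul, pow_one, mul_assoc]⟩
    | inv_mul_cancel s hs g _ ih =>
      obtain ⟨i, j, rfl⟩ := ih
      rcases hs with rfl | rfl
      · exact ⟨m - 1 + i, j, by rw [pow_add, a_inv, mul_assoc]⟩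
      · exact ⟨r ^ (n - 1) * i, n - 1 + j, by
          rw [pow_add, ← mul_assoc, ← x_pow_mul, x_inv, mul_assoc]⟩
  intro g
  obtain ⟨i, j, rfl⟩ := normal_form g
  exact ⟨(Fin.ofNat m i, Fin.ofNat n j), by
    simp [← pow_eq_pow_mod i ha, ← pow_eq_pow_mod j hx]⟩

theorem algHom_prod_surjective_of_isUnit {R A B C : Type*} [CommSemiring R]
    [Ring A] [Ring B] [Ring C] [Algebra R A] [Algebra R B] [Algebra R C]
    {f : A →ₐ[R] B} {g : A →ₐ[R] C} (hf : Surjective f) (hg : Surjective g)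
    {e : A} (hfe : IsUnit (f e)) (hge : g e = 0) :
    Surjective (f.prod g) := by
  rintro ⟨b, c⟩
  obtain ⟨v, rfl⟩ := hg c
  obtain ⟨w, hw⟩ := hf (↑hfe.unit⁻¹ * (b - f v))
  have hfew : f e * f w = b - f v := by rw [hw, ← mul_assoc, hfe.mul_val_inv, one_mul]
  exact ⟨v + e * w, by simp [hfew, hge]⟩

theorem isUnit_two {F B : Type*} [Field F] [Ring B] [Algebra F B] (h2 : (2 : F) ≠ 0) :
    IsUnit (2 : B) :=
  map_ofNat (algebraMap F B) 2 ▸ (IsUnit.mk0 (2 : F) h2).map (algebraMap F B)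

theorem exists_pow_eq_neg_one {K : Type*} [Field K] [Fintype K] {m : ℕ}
    (hm : 2 * m ∣ Fintype.card K - 1) : ∃ z : K, z ^ m = -1 := by
  classical
  obtain ⟨k, hk⟩ := hm
  obtain ⟨g, hg⟩ := IsCyclic.exists_ofOrder_eq_natCard (α := Kˣ)
  rw [Nat.card_eq_fintype_card, Fintype.card_units] at hg
  have hg_prim : IsPrimitiveRoot (g : K) (Fintype.card K - 1) :=
    IsPrimitiveRoot.coe_units_iff.2 (hg ▸ IsPrimitiveRoot.orderOf g)
  have hprim : IsPrimitiveRoot ((g : K) ^ (k * m)) 2 :=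
    hg_prim.pow (Nat.sub_pos_of_lt Fintype.one_lt_card) (by rw [hk]; ring)
  exact ⟨g ^ k, by rw [← pow_mul, hprim.eq_neg_one_of_two_right]⟩

theorem ringChar_ne_two_of_odd_card {K : Type*} [Field K] [Fintype K]
    (hK : Odd (Fintype.card K)) : ringChar K ≠ 2 := fun h ↦
  Nat.not_even_iff_odd.2 hK (Nat.even_iff.2 (even_card_iff_char_two.1 h))

section FiniteExtension

variable {F K : Type*} [Field F] [Fintype F] [Field K] [Algebra F K]

theorem finrank_eq_of_card_eq_pow [Fintype K] {n : ℕ} (h : Fintype.card K = Fintype.card F ^ n) :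
    finrank F K = n :=
  Nat.pow_right_injective Fintype.one_lt_card (card_eq_pow_finrank.symm.trans h)

theorem frobeniusAlgHom_pow_apply (n : ℕ) (z : K) :
    (frobeniusAlgHom F K ^ n) z = z ^ Fintype.card F ^ n := by
  rw [AlgHom.coe_pow, coe_frobeniusAlgHom, pow_iterate]

theorem adjoin_eq_top_of_frobeniusAlgHom_pow_ne [Finite K] {ℓ k : ℕ} (hℓ : ℓ.Prime)
    (hK : finrank F K = ℓ ^ (k + 1)) {c : K} (hc : (frobeniusAlgHom F K ^ ℓ ^ k) c ≠ c) :
    Algebra.adjoin F {c} = ⊤ := by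
  rw [← IntermediateField.adjoin_simple_eq_top_iff_of_isAlgebraic (.of_finite F c)]
  let L := IntermediateField.adjoin F {c}
  by_contra hL
  have hdvd : finrank F L ∣ ℓ ^ (k + 1) := hK ▸ ⟨_, (finrank_mul_finrank F L K).symm⟩
  have hne : finrank F L ≠ ℓ ^ (k + 1) := fun h ↦ hL <|
    IntermediateField.eq_of_le_of_finrank_eq le_top <| by
      rw [IntermediateField.finrank_top', hK]; exact h
  obtain ⟨j, hj, hLj⟩ := (Nat.dvd_prime_pow hℓ).1 hdvd
  have hjk : j ≤ k := by
    rcases hj.lt_or_eq with h | rfl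
    · omega
    · exact absurd hLj hne
  have : Fintype L := Fintype.ofFinite L
  have hfix := pow_card_pow (ℓ ^ (k - j)) (IntermediateField.AdjoinSimple.gen F c)
  rw [card_eq_pow_finrank (K := F) (V := L), hLj, ← pow_mul, ← pow_add,
    Nat.add_sub_cancel' hjk] at hfix
  exact hc <| by simpa [frobeniusAlgHom_pow_apply] using congr_arg (algebraMap L K) hfix

theorem exists_sq_eq_two_and_adjoin_eq_top [Finite K]
    (hF : Fintype.card F % 8 = 3 ∨ Fintype.card F % 8 = 5) (hK : finrank F K = 2) :
    ∃ c : K, c ^ 2 = 2 ∧ Algebra.adjoin F {c} = ⊤ := by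
  cases nonempty_fintype K
  have hcard : Fintype.card K % 8 = 1 := by
    rw [card_eq_pow_finrank (K := F), hK, Nat.pow_mod]
    rcases hF with h | h <;> rw [h]
  have hchar : ringChar K ≠ 2 := ringChar_ne_two_of_odd_card (Nat.odd_iff.2 (by omega))
  -- As `z⁻¹ = -z ^ 3`, the square root of `2` below is `z + z⁻¹`.
  obtain ⟨z, hz⟩ : ∃ z : K, z ^ 4 = -1 := exists_pow_eq_neg_one (by omega)
  have hz8 : z ^ 8 = 1 := by linear_combination (z ^ 4 - 1) * hz
  have hc : (z - z ^ 3) ^ 2 = 2 := by linear_combination (z ^ 2 - 2) * hz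
  have hσz : frobeniusAlgHom F K z = z ^ 3 ∨ frobeniusAlgHom F K z = -z := by
    rw [frobeniusAlgHom_apply, pow_eq_pow_mod _ hz8]
    rcases hF with h | h <;> rw [h]
    · exact .inl rfl
    · exact .inr (by linear_combination z * hz)
  have hσc : frobeniusAlgHom F K (z - z ^ 3) = -(z - z ^ 3) := by
    rw [map_sub, map_pow]
    rcases hσz with h | h <;> rw [h]
    · linear_combination -z * hz8
    · ring
  refine ⟨z - z ^ 3, hc, adjoin_eq_top_of_frobeniusAlgHom_pow_ne (k := 0) Nat.prime_two hK ?_⟩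
  rw [pow_zero, pow_one, hσc, Ne, Ring.eq_self_iff_eq_zero_of_char_ne_two hchar]
  intro hc0
  exact Ring.two_ne_zero hchar (by rw [← hc, hc0, zero_pow two_ne_zero])

theorem exists_quartic_root_and_adjoin_eq_top [Finite K]
    (hF : Fintype.card F ^ 2 % 16 = 9) (hK : finrank F K = 4) :
    ∃ c : K, c ^ 4 + 4 * c ^ 2 + 2 = 0 ∧ Algebra.adjoin F {c} = ⊤ := by
  cases nonempty_fintype K
  have hcard : Fintype.card K % 16 = 1 := by
    rw [card_eq_pow_finrank (K := F), hK, pow_mul _ 2 2, Nat.pow_mod, hF]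
  have hchar : ringChar K ≠ 2 := ringChar_ne_two_of_odd_card (Nat.odd_iff.2 (by omega))
  -- As `z⁻¹ = -z ^ 7`, the root below is `z - z⁻¹`.
  obtain ⟨z, hz⟩ : ∃ z : K, z ^ 8 = -1 := exists_pow_eq_neg_one (by omega)
  have hz16 : z ^ 16 = 1 := by linear_combination (z ^ 8 - 1) * hz
  have hsq : (z + z ^ 7) ^ 2 + 2 = z ^ 2 - z ^ 6 := by linear_combination (2 + z ^ 6) * hz
  have hc : (z + z ^ 7) ^ 4 + 4 * (z + z ^ 7) ^ 2 + 2 = 0 := by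
    linear_combination ((z + z ^ 7) ^ 2 + 2 + z ^ 2 - z ^ 6) * hsq + (z ^ 4 - 2) * hz
  have hσz : (frobeniusAlgHom F K ^ 2) z = -z := by
    rw [frobeniusAlgHom_pow_apply, pow_eq_pow_mod _ hz16, hF]
    linear_combination z * hz
  have hσc : (frobeniusAlgHom F K ^ 2) (z + z ^ 7) = -(z + z ^ 7) := by
    rw [map_add, map_pow, hσz]
    ring
  refine ⟨z + z ^ 7, hc, adjoin_eq_top_of_frobeniusAlgHom_pow_ne (k := 1) Nat.prime_two hK ?_⟩
  rw [pow_one, hσc, Ne, Ring.eq_self_iff_eq_zero_of_char_ne_two hchar]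
  intro hc0
  exact Ring.two_ne_zero hchar (by simpa [hc0] using hc)

end FiniteExtension

section Companion

variable {K : Type*} [CommRing K]

/-- The companion matrix of `T² - cT + d`, i.e. multiplication by `T` on `K[T] / (T² - cT + d)` in
the basis `1, T`. -/
def quadCompanion (c d : K) : Matrix (Fin 2) (Fin 2) K := !![0, -d; 1, c]

/-- The conjugation `T ↦ c - T` of `K[T] / (T² - cT + d)` in the basis `1, T`; its matrix does not
depend on `d`. -/
def quadConj (c : K) : Matrix (Fin 2) (Fin 2) K := !![1, c; 0, -1]

variable {c d : K}

theorem quadConj_sq (c : K) : quadConj c ^ 2 = 1 := by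
  rw [pow_two, quadConj, Matrix.mul_fin_two, Matrix.one_fin_two]
  simp

theorem quadConj_mul_quadCompanion_mul_quadConj (c d : K) :
    quadConj c * quadCompanion c d * quadConj c = c • 1 - quadCompanion c d := by
  ext i j
  fin_cases i <;> fin_cases j <;> simp [quadConj, quadCompanion]

theorem quadCompanion_sq (c d : K) :
    quadCompanion c d ^ 2 = c • quadCompanion c d - d • 1 := by
  ext i j
  fin_cases i <;> fin_cases j <;> simp [quadCompanion, pow_two, mul_comm, sub_eq_neg_add]

theorem sq_sq_eq_of_sq_eq {A : Type*} [Ring A] [Algebra K A] {a : A}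
    (h : a ^ 2 = c • a - d • 1) : (a ^ 2) ^ 2 = (c ^ 2 - 2 * d) • a ^ 2 - d ^ 2 • 1 := by
  have hca : c • a = a ^ 2 + d • 1 := by rw [h]; abel
  calc (a ^ 2) ^ 2 = (c • a - d • 1) ^ 2 := by rw [h]
    _ = c • c • a ^ 2 - (2 * d) • c • a + d ^ 2 • 1 := by
      simp only [pow_two, sub_mul, mul_sub, smul_mul_assoc, mul_smul_comm, mul_one, one_mul]
      module
    _ = (c ^ 2 - 2 * d) • a ^ 2 - d ^ 2 • 1 := by rw [hca]; module

-- Cramer's rule for the coordinates of `M` in the span of `1`, `A`, `X`, `A X`.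
theorem discrim_smul_eq_combination (c d : K) (M : Matrix (Fin 2) (Fin 2) K) :
    (c ^ 2 - 4 * d) • M =
      ((c ^ 2 - 4 * d) * M 0 0) • (1 : Matrix (Fin 2) (Fin 2) K) +
      ((c ^ 2 - 4 * d) * M 1 0) • (quadCompanion c d * quadConj c) +
      (c * (M 1 1 - M 0 0) + 2 * (M 0 1 - d * M 1 0)) •
        (quadCompanion c d - quadCompanion c d * quadConj c) -
      (2 * d * (M 1 1 - M 0 0) + c * (M 0 1 - d * M 1 0)) •
        (1 - quadConj c) := by
  ext i j
  fin_cases i <;> fin_cases j <;> simp [quadCompanion, quadConj] <;> ring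

theorem adjoin_quadCompanion_quadConj_eq_top {F : Type*} [CommRing F] [Algebra F K]
    (hD : IsUnit (c ^ 2 - 4 * d)) (hc : Algebra.adjoin F {c} = ⊤) :
    Algebra.adjoin F {quadCompanion c d, quadConj c} = ⊤ := by
  set S := Algebra.adjoin F {quadCompanion c d, quadConj c}
  have hA : quadCompanion c d ∈ S := Algebra.subset_adjoin (.inl rfl)
  have hX : quadConj c ∈ S := Algebra.subset_adjoin (.inr rfl)
  have scalar_mem (k : K) : algebraMap K (Matrix (Fin 2) (Fin 2) K) k ∈ S := by
    suffices h : Algebra.adjoin F {c} ≤ S.comap (IsScalarTower.toAlgHom F K _) from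
      h (hc ▸ Algebra.mem_top)
    rw [Algebra.adjoin_le_iff, Set.singleton_subset_iff]
    have hcS := add_mem (mul_mem (mul_mem hX hA) hX) hA
    rw [quadConj_mul_quadCompanion_mul_quadConj, sub_add_cancel,
      ← Algebra.algebraMap_eq_smul_one] at hcS
    exact hcS
  have smul_mem (k : K) {M : Matrix (Fin 2) (Fin 2) K} (hM : M ∈ S) : k • M ∈ S :=
    Algebra.smul_def k M ▸ mul_mem (scalar_mem k) hM
  rw [Algebra.eq_top_iff]
  intro M
  have hDM : (c ^ 2 - 4 * d) • M ∈ S := by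
    rw [discrim_smul_eq_combination]
    exact sub_mem (add_mem (add_mem (smul_mem _ (one_mem S)) (smul_mem _ (mul_mem hA hX)))
      (smul_mem _ (sub_mem hA (mul_mem hA hX)))) (smul_mem _ (sub_mem (one_mem S) hX))
  simpa [smul_smul] using smul_mem ↑hD.unit⁻¹ hDM

end Companion

namespace QD32

/-- The defining relations of `QD₃₂`, imposed on two elements `A`, `X` of an arbitrary monoid. -/
structure Relations {M : Type*} [Monoid M] (A X : M) : Prop where
  pow_sixteen : A ^ 16 = 1
  sq : X ^ 2 = 1
  conj : X * A * X = A ^ 7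

/-- The generator of `QD₃₂` with `a ^ 16 = 1`. -/
def a : QD32 := PresentedGroup.of (rels := qdRels 5) 0

/-- The generator of `QD₃₂` with `x ^ 2 = 1`. -/
def x : QD32 := PresentedGroup.of (rels := qdRels 5) 1

theorem relations : Relations a x where
  pow_sixteen := PresentedGroup.one_of_mem (rels := qdRels 5) (x := .of 0 ^ 16) (by simp [qdRels])
  sq := PresentedGroup.one_of_mem (rels := qdRels 5) (x := .of 1 ^ 2) (by simp [qdRels])
  conj := PresentedGroup.mk_eq_mk_of_mul_inv_mem (rels := qdRels 5)
    (x := .of 1 * .of 0 * .of 1) (y := FreeGroup.of 0 ^ 7) (by simp [qdRels])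

theorem closure_a_x : Subgroup.closure {a, x} = (⊤ : Subgroup QD32) :=
  (Subgroup.eq_top_iff' _).2 <| PresentedGroup.generated_by (qdRels 5) _ <| Fin.forall_fin_two.2
    ⟨Subgroup.subset_closure (.inl rfl), Subgroup.subset_closure (.inr rfl)⟩

theorem a_pow_mul_x_pow_surjective :
    Surjective fun ij : Fin 16 × Fin 2 ↦ a ^ (ij.1 : ℕ) * x ^ (ij.2 : ℕ) := by
  have x_mul_a : x * a = a ^ 7 * x := by
    rw [← relations.conj, mul_assoc _ x x, ← pow_two, relations.sq, mul_one]
  exact pow_mul_pow_surjective_of_closure_eq_top relations.pow_sixteen relations.sq x_mul_a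
    closure_a_x

instance : Finite QD32 := .of_surjective _ a_pow_mul_x_pow_surjective

theorem natCard_le : Nat.card QD32 ≤ 32 := by
  simpa using Nat.card_le_card_of_surjective _ a_pow_mul_x_pow_surjective

theorem finrank_le (F : Type*) [Field F] : finrank F (MonoidAlgebra F QD32) ≤ 32 :=
  finrank_eq_nat_card_basis (MonoidAlgebra.basis QD32 F) ▸ natCard_le

section Lift

variable {M : Type*} [Monoid M] {A X : M} (h : Relations A X)

/-- A pair satisfying the relations, as a map from the two free generators to the units of the
monoid: the relations make both elements invertible. -/
def Relations.units : Fin 2 → Mˣ :=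
  ![.ofPowEqOne A 16 h.pow_sixteen (by simp), .ofPowEqOne X 2 h.sq (by simp)]

theorem Relations.freeGroup_lift_units_eq_one :
    ∀ r ∈ qdRels 5, FreeGroup.lift h.units r = 1 := by
  rintro r (rfl | rfl | rfl)
  · ext; simp [units]
  · ext; simp [units]
  · rw [map_mul, map_inv, mul_inv_eq_one]
    ext; simpa [units] using h.conj

/-- The universal property of `QD₃₂` for monoids: a pair `(A, X)` satisfying the relations extends
to a homomorphism with `a ↦ A` and `x ↦ X`. -/
def lift : QD32 →* M :=
  (Units.coeHom M).comp (PresentedGroup.toGroup h.freeGroup_lift_units_eq_one)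

@[simp]
theorem lift_a : lift h a = A :=
  congr_arg Units.val (PresentedGroup.toGroup.of h.freeGroup_lift_units_eq_one (x := 0))

@[simp]
theorem lift_x : lift h x = X :=
  congr_arg Units.val (PresentedGroup.toGroup.of h.freeGroup_lift_units_eq_one (x := 1))

end Lift

theorem Relations.of_sq_eq_one {M : Type*} [CommMonoid M] {A X : M} (hA : A ^ 2 = 1)
    (hX : X ^ 2 = 1) : Relations A X where
  pow_sixteen := by rw [pow_mul A 2 8, hA, one_pow]
  sq := hX
  conj := by rw [mul_right_comm, ← pow_two, hX, one_mul, pow_succ, pow_mul A 2 3, hA]; simp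

section AlgLift

variable (F : Type*) [CommSemiring F] {B : Type*} [Semiring B] [Algebra F B] {A X : B}

/-- The universal property of the group algebra of `QD₃₂`: a pair `(A, X)` in an algebra satisfying
the relations extends to an algebra homomorphism with `a ↦ A` and `x ↦ X`. -/
noncomputable def algLift (h : Relations A X) : MonoidAlgebra F QD32 →ₐ[F] B :=
  MonoidAlgebra.lift F B QD32 (lift h)

@[simp]
theorem algLift_single (h : Relations A X) (g : QD32) (r : F) :
    algLift F h (MonoidAlgebra.single g r) = r • lift h g :=
  MonoidAlgebra.lift_single ..

variable {F}

theorem algLift_surjective (h : Relations A X) (hgen : Algebra.adjoin F {A, X} = ⊤) :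
    Surjective (algLift F h) := by
  rw [← AlgHom.range_eq_top, eq_top_iff, ← hgen, Algebra.adjoin_le_iff, Set.pair_subset_iff]
  exact ⟨⟨.single a 1, by simp⟩, ⟨.single x 1, by simp⟩⟩

end AlgLift

section Matrices

variable {K : Type*} [CommRing K] {c d : K}

theorem relations_of_quadCompanion_pow_eight (hd : d ^ 2 = 1)
    (h8 : quadCompanion c d ^ 8 = d • 1) :
    Relations (quadCompanion c d) (quadConj c) := by
  have h16 : quadCompanion c d ^ 16 = 1 := by
    rw [pow_mul _ 8 2, h8, smul_pow, hd, one_pow, one_smul]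
  refine ⟨h16, quadConj_sq c, ?_⟩
  have norm_eq : (c • 1 - quadCompanion c d) * quadCompanion c d = d • 1 := by
    rw [sub_mul, smul_one_mul, ← pow_two, quadCompanion_sq, sub_sub_cancel]
  calc quadConj c * quadCompanion c d * quadConj c
      = (c • 1 - quadCompanion c d) * quadCompanion c d ^ 16 := by
        rw [quadConj_mul_quadCompanion_mul_quadConj, h16, mul_one]
    _ = quadCompanion c d ^ 8 * quadCompanion c d ^ 15 := by
        rw [pow_succ' _ 15, ← mul_assoc, norm_eq, h8]
    _ = quadCompanion c d ^ 7 := by rw [← pow_add, pow_add _ 16 7, h16, one_mul]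

theorem quadCompanion_zero_one_sq : quadCompanion (0 : K) 1 ^ 2 = -1 := by
  simp [quadCompanion_sq]

theorem quadCompanion_one_pow_four (hc : c ^ 2 = 2) : quadCompanion c 1 ^ 4 = -1 := by
  rw [pow_mul _ 2 2, sq_sq_eq_of_sq_eq (quadCompanion_sq c 1), hc]
  simp

theorem quadCompanion_neg_one_pow_eight (hc : c ^ 4 + 4 * c ^ 2 + 2 = 0) :
    quadCompanion c (-1) ^ 8 = -1 := by
  have trace_eq : (c ^ 2 - 2 * -1) ^ 2 - 2 * (-1) ^ 2 = 0 := by linear_combination hc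
  rw [pow_mul _ 4 2, pow_mul _ 2 2, sq_sq_eq_of_sq_eq (sq_sq_eq_of_sq_eq
    (quadCompanion_sq c (-1))), trace_eq]
  simp

theorem relations_quadCompanion_zero_one :
    Relations (quadCompanion (0 : K) 1) (quadConj 0) :=
  relations_of_quadCompanion_pow_eight (one_pow 2) <| by
    rw [pow_mul _ 2 4, quadCompanion_zero_one_sq, one_smul, Even.neg_one_pow (by decide)]

theorem relations_quadCompanion_one (hc : c ^ 2 = 2) :
    Relations (quadCompanion c 1) (quadConj c) :=
  relations_of_quadCompanion_pow_eight (one_pow 2) <| by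
    simp [pow_mul _ 4 2, quadCompanion_one_pow_four hc]

theorem relations_quadCompanion_neg_one (hc : c ^ 4 + 4 * c ^ 2 + 2 = 0) :
    Relations (quadCompanion c (-1)) (quadConj c) :=
  relations_of_quadCompanion_pow_eight neg_one_sq <| by
    simp [quadCompanion_neg_one_pow_eight hc]

end Matrices

section Surjectivity

variable {F K : Type*} [Field F] [CommRing K] [Algebra F K] {c : K}

theorem algLift_quadCompanion_zero_one_surjective (h2 : (2 : F) ≠ 0) :
    Surjective (algLift F (relations_quadCompanion_zero_one (K := F))) := by
  have isUnit_discrim : IsUnit ((0 : F) ^ 2 - 4 * 1) := by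
    rw [show (0 : F) ^ 2 - 4 * 1 = -(2 * 2) by ring]
    exact (IsUnit.mk0 _ (mul_ne_zero h2 h2)).neg
  exact algLift_surjective _
    (adjoin_quadCompanion_quadConj_eq_top isUnit_discrim (Subsingleton.elim _ _))

theorem algLift_quadCompanion_one_surjective (h2 : IsUnit (2 : K)) (hc : c ^ 2 = 2)
    (hgen : Algebra.adjoin F {c} = ⊤) :
    Surjective (algLift F (relations_quadCompanion_one hc)) := by
  have isUnit_discrim : IsUnit (c ^ 2 - 4 * 1) := by
    rw [show c ^ 2 - 4 * 1 = -2 by rw [hc]; ring]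
    exact h2.neg
  exact algLift_surjective _ (adjoin_quadCompanion_quadConj_eq_top isUnit_discrim hgen)

theorem algLift_quadCompanion_neg_one_surjective (h2 : IsUnit (2 : K))
    (hc : c ^ 4 + 4 * c ^ 2 + 2 = 0) (hgen : Algebra.adjoin F {c} = ⊤) :
    Surjective (algLift F (relations_quadCompanion_neg_one hc)) := by
  have sq_mul_discrim : c ^ 2 * (c ^ 2 - 4 * -1) = -2 := by linear_combination hc
  have isUnit_discrim : IsUnit (c ^ 2 - 4 * -1) :=
    isUnit_of_mul_isUnit_right (sq_mul_discrim ▸ h2.neg)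
  exact algLift_surjective _ (adjoin_quadCompanion_quadConj_eq_top isUnit_discrim hgen)

end Surjectivity

section Wedderburn

variable (F : Type*) {K₂ K₄ : Type*} [Field F] [CommRing K₂] [Algebra F K₂] [CommRing K₄]
  [Algebra F K₄] {c₂ : K₂} {c₄ : K₄}

/-- The product of the three two-dimensional representations, for the companion matrices of
`T² + 1`, `T² - c₂T + 1` and `T² - c₄T - 1`. -/
noncomputable def matrixHom (hc₂ : c₂ ^ 2 = 2) (hc₄ : c₄ ^ 4 + 4 * c₄ ^ 2 + 2 = 0) :
    MonoidAlgebra F QD32 →ₐ[F]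
      Matrix (Fin 2) (Fin 2) F × Matrix (Fin 2) (Fin 2) K₂ × Matrix (Fin 2) (Fin 2) K₄ :=
  (algLift F relations_quadCompanion_zero_one).prod
    ((algLift F (relations_quadCompanion_one hc₂)).prod
      (algLift F (relations_quadCompanion_neg_one hc₄)))

/-- The one-dimensional representation `a ↦ ε`, `x ↦ δ` attached to signs `ε`, `δ`. -/
noncomputable def linearChar {ε δ : F} (hε : ε ^ 2 = 1) (hδ : δ ^ 2 = 1) :
    MonoidAlgebra F QD32 →ₐ[F] F :=
  algLift F (.of_sq_eq_one hε hδ)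

/-- The product of the four characters, in the order `(a, x) ↦ (1, 1), (1, -1), (-1, 1), (-1, -1)`,
and the three two-dimensional representations: the Wedderburn decomposition map. -/
noncomputable def wedderburnHom (hc₂ : c₂ ^ 2 = 2) (hc₄ : c₄ ^ 4 + 4 * c₄ ^ 2 + 2 = 0) :
    MonoidAlgebra F QD32 →ₐ[F]
      F × F × F × F × Matrix (Fin 2) (Fin 2) F × Matrix (Fin 2) (Fin 2) K₂ ×
        Matrix (Fin 2) (Fin 2) K₄ :=
  (linearChar F (one_pow 2) (one_pow 2)).prod <| (linearChar F (one_pow 2) neg_one_sq).prod <|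
    (linearChar F neg_one_sq (one_pow 2)).prod <| (linearChar F neg_one_sq neg_one_sq).prod <|
      matrixHom F hc₂ hc₄

/-- The sum `∑ i < 8, a ^ (2 * i)` in factored form, each factor killing one of the three matrix
blocks. -/
noncomputable def evenPowSum : MonoidAlgebra F QD32 :=
  (1 + .of F QD32 a ^ 2) * (1 + .of F QD32 a ^ 4) * (1 + .of F QD32 a ^ 8)

variable {F}

theorem linearChar_surjective {ε δ : F} (hε : ε ^ 2 = 1) (hδ : δ ^ 2 = 1) :
    Surjective (linearChar F hε hδ) :=
  fun y ↦ ⟨algebraMap F _ y, AlgHom.commutes _ y⟩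

theorem matrixHom_surjective (h2 : (2 : F) ≠ 0)
    (hc₂ : c₂ ^ 2 = 2) (hgen₂ : Algebra.adjoin F {c₂} = ⊤)
    (hc₄ : c₄ ^ 4 + 4 * c₄ ^ 2 + 2 = 0) (hgen₄ : Algebra.adjoin F {c₄} = ⊤) :
    Surjective (matrixHom F hc₂ hc₄) := by
  let α := MonoidAlgebra.of F QD32 a
  have hA₁ : quadCompanion (0 : F) 1 ^ 4 = 1 := by
    rw [pow_mul _ 2 2, quadCompanion_zero_one_sq, neg_one_sq]
  have hA₁' : quadCompanion (0 : F) 1 ^ 8 = 1 := by rw [pow_mul _ 4 2, hA₁, one_pow]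
  have hA₂ := quadCompanion_one_pow_four hc₂
  have hA₂' : quadCompanion c₂ 1 ^ 8 = 1 := by rw [pow_mul _ 4 2, hA₂, neg_one_sq]
  have hA₄ := quadCompanion_neg_one_pow_eight hc₄
  have surj_prod₂₄ := algHom_prod_surjective_of_isUnit (e := 1 + α ^ 8)
    (algLift_quadCompanion_one_surjective (isUnit_two h2) hc₂ hgen₂)
    (algLift_quadCompanion_neg_one_surjective (isUnit_two h2) hc₄ hgen₄)
    (by simp [α, hA₂', one_add_one_eq_two, isUnit_two h2])
    (by simp [α, hA₄])
  exact algHom_prod_surjective_of_isUnit (e := (1 + α ^ 4) * (1 + α ^ 8))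
    (algLift_quadCompanion_zero_one_surjective h2) surj_prod₂₄
    (by simp [α, hA₁, hA₁', one_add_one_eq_two, isUnit_two h2])
    (by simp [α, hA₄, hA₂])

theorem matrixHom_evenPowSum (hc₂ : c₂ ^ 2 = 2) (hc₄ : c₄ ^ 4 + 4 * c₄ ^ 2 + 2 = 0) :
    matrixHom F hc₂ hc₄ (evenPowSum F) = 0 := by
  simp [matrixHom, quadCompanion_zero_one_sq, quadCompanion_one_pow_four hc₂,
    quadCompanion_neg_one_pow_eight hc₄, evenPowSum]

theorem linearChar_evenPowSum {ε δ : F} (hε : ε ^ 2 = 1) (hδ : δ ^ 2 = 1) :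
    linearChar F hε hδ (evenPowSum F) = 2 * 2 * 2 := by
  have hε4 : ε ^ 4 = 1 := by rw [pow_mul ε 2 2, hε, one_pow]
  have hε8 : ε ^ 8 = 1 := by rw [pow_mul ε 4 2, hε4, one_pow]
  simp [linearChar, evenPowSum, hε, hε4, hε8, one_add_one_eq_two]

theorem wedderburnHom_surjective (h2 : (2 : F) ≠ 0)
    (hc₂ : c₂ ^ 2 = 2) (hgen₂ : Algebra.adjoin F {c₂} = ⊤)
    (hc₄ : c₄ ^ 4 + 4 * c₄ ^ 2 + 2 = 0) (hgen₄ : Algebra.adjoin F {c₄} = ⊤) :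
    Surjective (wedderburnHom F hc₂ hc₄) := by
  let s := evenPowSum F
  let α := MonoidAlgebra.of F QD32 a
  let ξ := MonoidAlgebra.of F QD32 x
  have hs := matrixHom_evenPowSum (F := F) hc₂ hc₄
  have hχα {ε δ : F} (hε : ε ^ 2 = 1) (hδ : δ ^ 2 = 1) : linearChar F hε hδ α = ε := by
    simp [linearChar, α]
  have hχξ {ε δ : F} (hε : ε ^ 2 = 1) (hδ : δ ^ 2 = 1) : linearChar F hε hδ ξ = δ := by
    simp [linearChar, ξ]
  refine algHom_prod_surjective_of_isUnit (linearChar_surjective _ _) (e := s * (1 + α) * (1 + ξ))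
    (algHom_prod_surjective_of_isUnit (linearChar_surjective _ _) (e := s * (1 + α))
    (algHom_prod_surjective_of_isUnit (linearChar_surjective _ _) (e := s * (1 + ξ))
    (algHom_prod_surjective_of_isUnit (linearChar_surjective _ _) (e := s)
    (matrixHom_surjective h2 hc₂ hgen₂ hc₄ hgen₄)
    ?_ ?_) ?_ ?_) ?_ ?_) ?_ ?_
  all_goals simp [s, hs, linearChar_evenPowSum, hχα, hχξ, h2, one_add_one_eq_two]

end Wedderburn

end QD32

theorem groupAlgebra_QD32_wedderburn_pm_three_five_general {F K₂ K₄ : Type*} [Field F]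
    [CommRing K₂] [Algebra F K₂] [CommRing K₄] [Algebra F K₄] (h2 : (2 : F) ≠ 0)
    {c₂ : K₂} (hc₂ : c₂ ^ 2 = 2) (hgen₂ : Algebra.adjoin F {c₂} = ⊤) (hK₂ : finrank F K₂ = 2)
    {c₄ : K₄} (hc₄ : c₄ ^ 4 + 4 * c₄ ^ 2 + 2 = 0) (hgen₄ : Algebra.adjoin F {c₄} = ⊤)
    (hK₄ : finrank F K₄ = 4) :
    Nonempty (MonoidAlgebra F QD32 ≃ₐ[F]
      (F × F × F × F × Matrix (Fin 2) (Fin 2) F × Matrix (Fin 2) (Fin 2) K₂ ×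
        Matrix (Fin 2) (Fin 2) K₄)) := by
  let Φ := (QD32.wedderburnHom F hc₂ hc₄).toLinearMap
  have hsurj : Surjective Φ := QD32.wedderburnHom_surjective h2 hc₂ hgen₂ hc₄ hgen₄
  have : Module.Finite F K₂ := finite_of_finrank_pos (by omega)
  have : Module.Finite F K₄ := finite_of_finrank_pos (by omega)
  have : Module.Finite F (MonoidAlgebra F QD32) := .of_basis (MonoidAlgebra.basis QD32 F)
  have hfinrank := (QD32.finrank_le F).antisymm <| by
    simpa [finrank_matrix, hK₂, hK₄] using LinearMap.finrank_le_finrank_of_surjective hsurj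
  have hinj : Injective Φ := by
    rw [LinearMap.injective_iff_surjective_of_finrank_eq_finrank]
    · exact hsurj
    · simp [finrank_matrix, hK₂, hK₄, hfinrank]
  exact ⟨.ofBijective (QD32.wedderburnHom F hc₂ hc₄) ⟨hinj, hsurj⟩⟩

/-- For `q ≡ ±3, ±5 (mod 16)`,
`F_q[QD_32] ≅ F_q⁴ ⊕ M(2,F_q) ⊕ M(2,F_{q²}) ⊕ M(2,F_{q⁴})`. -/
theorem groupAlgebra_QD32_wedderburn_pm_three_five (F : Type) [Field F] [Fintype F]
    (p n : ℕ) [Fact p.Prime] (hp : Odd p) [CharP F p]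
    (hn : 0 < n) (hq : Fintype.card F = p ^ n)
    (h16 : Fintype.card F % 16 = 3 ∨ Fintype.card F % 16 = 13 ∨
      Fintype.card F % 16 = 5 ∨ Fintype.card F % 16 = 11)
    (K₂ : Type) [Field K₂] [Fintype K₂] [Algebra F K₂]
    (hK₂ : Fintype.card K₂ = Fintype.card F ^ 2)
    (K₄ : Type) [Field K₄] [Fintype K₄] [Algebra F K₄]
    (hK₄ : Fintype.card K₄ = Fintype.card F ^ 4) :
    Nonempty (MonoidAlgebra F QD32 ≃ₐ[F]
      (F × F × F × F × Matrix (Fin 2) (Fin 2) F × Matrix (Fin 2) (Fin 2) K₂ ×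
        Matrix (Fin 2) (Fin 2) K₄)) := by
  have h2 : (2 : F) ≠ 0 :=
    Ring.two_ne_zero (ringChar_ne_two_of_odd_card (Nat.odd_iff.2 (by omega)))
  have hF_sq : Fintype.card F ^ 2 % 16 = 9 := by
    rw [Nat.pow_mod]
    rcases h16 with h | h | h | h <;> rw [h]
  have hfin₂ : finrank F K₂ = 2 := finrank_eq_of_card_eq_pow hK₂
  have hfin₄ : finrank F K₄ = 4 := finrank_eq_of_card_eq_pow hK₄
  obtain ⟨c₂, hc₂, hgen₂⟩ := exists_sq_eq_two_and_adjoin_eq_top (by omega) hfin₂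
  obtain ⟨c₄, hc₄, hgen₄⟩ := exists_quartic_root_and_adjoin_eq_top hF_sq hfin₄
  exact groupAlgebra_QD32_wedderburn_pm_three_five_general h2 hc₂ hgen₂ hfin₂ hc₄ hgen₄ hfin₄
end
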